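/- Let (E, ℰ) be a standard Borel (Lusin) space and let ν be a Markov kernel on E. Then there exist a measurable space (F, 𝓕), a probability measure μ on (F, 𝓕), and a measurable map X : E × F → E such that for every x ∈ E the pushforward of μ under y ↦ X(x, y) equals ν(x, ·); equivalently, the dynamical system T̃(x, y) = (X(x, y), y) on E × F dilates ν, in the sense that for every bounded measurable f : E → ℝ and every x ∈ E, ∫_F f(X(x, y)) dμ(y) = ∫_E f(z) ν(x, dz). -/

import Mathlib

open MeasureTheory ProbabilityTheory

/-- Every Markov kernel `ν` on a standard Borel (Lusin) space `E` can be dilated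
into a dynamical system: there are a measurable space `F`, a probability measure
`μ` on `F` and a measurable map `X : E × F → E` such that `ν(x, ·)` is the
pushforward of `μ` under `X(x, ·)` for every `x`; equivalently, the dynamical
system `T'(x,y) = (X(x,y), y)` on `E × F` dilates `ν`, in the sense that
`∫_F f(X(x,y)) dμ(y) = ∫_E f(z) ν(x, dz)` for every bounded measurable `f`. -/
theorem markov_kernel_dilation_exists
    {E : Type} [MeasurableSpace E] [StandardBorelSpace E]
    (ν : Kernel E E) [IsMarkovKernel ν] :
    ∃ (F : Type) (_ : MeasurableSpace F) (μ : Measure F),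
      IsProbabilityMeasure μ ∧
      ∃ X : E × F → E, Measurable X ∧
        (∀ x : E, Measure.map (fun y => X (x, y)) μ = ν x) ∧
        (∀ f : E → ℝ, Measurable f → (∃ C, ∀ z, |f z| ≤ C) →
          ∀ x : E, ∫ y, f (X (x, y)) ∂μ = ∫ z, f z ∂(ν x)) := by
  rcases isEmpty_or_nonempty E with hE | hE
  · exact ⟨unitInterval, inferInstance, volume, inferInstance, fun p => p.1,
      measurable_fst, fun x => hE.elim x, fun _ _ _ x => hE.elim x⟩
  · obtain ⟨g, hg, hmap⟩ := ν.exists_measurable_map_eq_unitInterval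
    refine ⟨unitInterval, inferInstance, volume, inferInstance, Function.uncurry g, hg,
      fun x => (hmap x).symm ▸ rfl, fun f hf _ x => ?_⟩
    have hx : Measurable (g x) := hg.comp measurable_prodMk_left
    rw [← hmap x, integral_map hx.aemeasurable hf.aestronglyMeasurable]
    rfl
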